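/- Let 𝔐 be a Γ-ring satisfying conditions (i)–(iv), let k ≥ 1 be an integer, let f : 𝔐 × Γ × 𝔐 → 𝔐 satisfy conditions (v)–(vii), fix an index 1 ∈ Λ with e₁ := e_1 and γ₁ := γ_1, and define the Peirce components 𝔐_{ij} as below. Then f(x, γ, u) = 0 for all x, u ∈ 𝔐₁₂ and all γ ∈ Γ. -/

import Mathlib

/-!
Write `e, γ₁` for the chosen idempotent pair. The proof uses only one-sided multiplications.

* If `e_b γ_b a = a` for some `b`, then `a δ f(x, γ, y) = f(aδx, γ, aδy)`: pad `a` on the left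
  with copies of `e_b` to reach `k` factors (`exists_prodF_snoc_eq_tri`).
* If `eγ₁p = 0` and `eγ₁q = q`, then `z = f(p, γ, q)` vanishes. Indeed `eγ₁z = f(0, γ, q) = 0`, so
  `aδz = aδ(z - eγ₁z) = F'(a, δ)γ₁z`, which is `f(F'(a, δ)γ₁p, γ, 0) = 0` because
  `F'(a, δ)γ₁q = aδ(q - eγ₁q) = 0`; now apply (iii).
* If `x, u ∈ 𝔐₁₂`, then `xδy = xγ₁Y` and `uδy = uγ₁Y` with `Y = F(δ, y)`, and `eγ₁Y = 0`. Moreover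
  `(e + x)γ₁Y = xγ₁Y` and `(e + x)γ₁(uγ₁Y) = uγ₁Y`, so
  `f(xδy, γ, uδy) = (e + x)γ₁f(Y, γ, uγ₁Y) = 0` by the previous point. By (vii), every `k`-fold
  right multiple of `f(x, γ, u)` is zero, and iterating (ii) gives `f(x, γ, u) = 0`.
-/

/-- A `Γ`-ring in the sense of Barnes: abelian groups `M` and `Γ` with a triple product
`M → Γ → M → M` that is additive in each variable and associative. -/
structure GammaRing (M : Type*) (Γ : Type*) [AddCommGroup M] [AddCommGroup Γ] where
  tri : M → Γ → M → M
  add_left : ∀ x y α z, tri (x + y) α z = tri x α z + tri y α z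
  add_right : ∀ x α y z, tri x α (y + z) = tri x α y + tri x α z
  add_mid : ∀ x α β y, tri x (α + β) y = tri x α y + tri x β y
  assoc : ∀ x α y β z, tri (tri x α y) β z = tri x α (tri y β z)

namespace GammaRing

variable {M Γ : Type*} [AddCommGroup M] [AddCommGroup Γ]

/-- The product `x₀ γ₀ x₁ γ₁ ⋯ γ_{k-1} x_k` (right associated). -/
def prodF (G : GammaRing M Γ) : (k : ℕ) → (Fin (k + 1) → M) → (Fin k → Γ) → M
  | 0, x, _ => x 0
  | k + 1, x, γ => G.tri (x 0) (γ 0) (G.prodF k (fun i => x i.succ) (fun i => γ i.succ))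

end GammaRing

/-- The Peirce component `𝔐_{ij}` (indices `0, 1` standing for `1, 2`) relative to the
`γ₁`-idempotent `e₁`. -/
def GammaRing.peirce {M Γ : Type*} [AddCommGroup M] [AddCommGroup Γ] (G : GammaRing M Γ)
    (e₁ : M) (γ₁ : Γ) (i j : Fin 2) : Set M :=
  {x | G.tri e₁ γ₁ x = (if i = 0 then x else 0) ∧ G.tri x γ₁ e₁ = (if j = 0 then x else 0)}

namespace GammaRing

variable {M Γ : Type*} [AddCommGroup M] [AddCommGroup Γ] (G : GammaRing M Γ)

lemma tri_zero (x : M) (α : Γ) : G.tri x α 0 = 0 := by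
  simpa using G.add_right x α 0 0

lemma zero_tri (α : Γ) (x : M) : G.tri 0 α x = 0 := by
  simpa using G.add_left 0 0 α x

lemma tri_sub (x : M) (α : Γ) (y z : M) : G.tri x α (y - z) = G.tri x α y - G.tri x α z := by
  rw [eq_sub_iff_add_eq, ← G.add_right, sub_add_cancel]

lemma sub_tri (x y : M) (α : Γ) (z : M) : G.tri (x - y) α z = G.tri x α z - G.tri y α z := by
  rw [eq_sub_iff_add_eq, ← G.add_left, sub_add_cancel]

/-- Left multiplication by an element fixed by a left idempotent `e` is a multiplication by
`j + 1` factors: pad on the left with copies of `e`. -/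
lemma exists_prodF_snoc_eq_tri (e a : M) (γ δ : Γ) (ha : G.tri e γ a = a) (j : ℕ) :
    ∃ (u : Fin (j + 1) → M) (δs : Fin (j + 1) → Γ),
      ∀ x, G.prodF (j + 1) (Fin.snoc u x) δs = G.tri a δ x := by
  induction j with
  | zero => exact ⟨fun _ => a, fun _ => δ, fun x => by simp [prodF, Fin.snoc]⟩
  | succ j ih =>
    obtain ⟨u, δs, h⟩ := ih
    refine ⟨Fin.cons e u, Fin.cons γ δs, fun x => ?_⟩
    rw [← Fin.cons_snoc_eq_snoc_cons, prodF]
    simp only [Fin.cons_zero, Fin.cons_succ]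
    rw [h, ← G.assoc, ha]

lemma prodF_cons_tri (z m : M) (δ : Γ) (k : ℕ) (u : Fin k → M) (δs : Fin k → Γ) :
    G.prodF k (Fin.cons (G.tri z δ m) u) δs = G.tri z δ (G.prodF k (Fin.cons m u) δs) := by
  cases k with
  | zero => simp [prodF]
  | succ k => simp [prodF, G.assoc]

/-- Iterated form of condition (ii). -/
lemma eq_zero_of_prodF_cons
    (hii : ∀ x : M, (∀ (γ : Γ) (m : M), G.tri x γ m = 0) → x = 0) (k : ℕ) :
    ∀ z : M, (∀ (u : Fin k → M) (δ : Fin k → Γ), G.prodF k (Fin.cons z u) δ = 0) → z = 0 := by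
  induction k with
  | zero => exact fun z h => by simpa [prodF] using h Fin.elim0 Fin.elim0
  | succ k ih =>
    refine fun z h => hii z fun γ m => ih _ fun u δ => ?_
    rw [prodF_cons_tri]
    simpa [prodF] using h (Fin.cons m u) (Fin.cons γ δ)

end GammaRing

/-- Claim 3: `f(x₁₂, γ, u₁₂) = 0`. -/
theorem gammaRing_f_claim3
    {M Γ Λ : Type*} [AddCommGroup M] [AddCommGroup Γ] [Nonempty Λ]
    (G : GammaRing M Γ)
    (e : Λ → M) (γs : Λ → Γ)
    (hidem : ∀ a, G.tri (e a) (γs a) (e a) = e a)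
    -- condition (i)
    (F : Λ → Γ → M → M) (F' : Λ → M → Γ → M)
    (hFadd : ∀ a γ x y, F a γ (x + y) = F a γ x + F a γ y)
    (hF'add : ∀ a x y γ, F' a (x + y) γ = F' a x γ + F' a y γ)
    (hFγ : ∀ a x, F a (γs a) x = x - G.tri (e a) (γs a) x)
    (hF'γ : ∀ a x, F' a x (γs a) = x - G.tri x (γs a) (e a))
    (hFmid : ∀ a x y β γ, G.tri (F' a x β) γ y = G.tri x β (F a γ y))
    -- condition (ii)
    (hii : ∀ x : M, (∀ (γ : Γ) (m : M), G.tri x γ m = 0) → x = 0)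
    -- condition (iii)
    (hiii : ∀ x : M, (∀ (a : Λ) (γ δ : Γ) (m : M), G.tri (G.tri (e a) γ m) δ x = 0) → x = 0)
    -- condition (iv)
    (hiv : ∀ (a : Λ) (x : M),
      (∀ (γ δ : Γ) (m : M),
        F' a (G.tri (G.tri (G.tri (e a) (γs a) x) (γs a) (e a)) γ m) δ = 0) →
      G.tri (G.tri (e a) (γs a) x) (γs a) (e a) = 0)
    (k : ℕ) (hk : 1 ≤ k)
    (f : M → Γ → M → M)
    -- condition (v)
    (hv : ∀ (x : M) (γ : Γ), f x γ 0 = 0 ∧ f 0 γ x = 0)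
    -- condition (vi): u₁γ₁u₂⋯γ_{k-1}u_kγ_k f(x,γ,y) = f(u₁γ₁⋯u_kγ_k x, γ, u₁γ₁⋯u_kγ_k y)
    (hvi : ∀ (u : Fin k → M) (δ : Fin k → Γ) (x : M) (γ : Γ) (y : M),
      G.prodF k (Fin.snoc u (f x γ y)) δ =
        f (G.prodF k (Fin.snoc u x) δ) γ (G.prodF k (Fin.snoc u y) δ))
    -- condition (vii): f(x,γ,y)γ₁u₁⋯γ_ku_k = f(xγ₁u₁⋯γ_ku_k, γ, yγ₁u₁⋯γ_ku_k)
    (hvii : ∀ (u : Fin k → M) (δ : Fin k → Γ) (x : M) (γ : Γ) (y : M),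
      G.prodF k (Fin.cons (f x γ y) u) δ =
        f (G.prodF k (Fin.cons x u) δ) γ (G.prodF k (Fin.cons y u) δ))
    (a₁ : Λ) :
    ∀ x ∈ G.peirce (e a₁) (γs a₁) 0 1, ∀ u ∈ G.peirce (e a₁) (γs a₁) 0 1, ∀ γ : Γ,
      f x γ u = 0 := by
  obtain ⟨j, rfl⟩ : ∃ j, k = j + 1 := ⟨k - 1, by omega⟩
  have hleft : ∀ (b : Λ) (a : M) (δ : Γ), G.tri (e b) (γs b) a = a → ∀ x γ y,
      G.tri a δ (f x γ y) = f (G.tri a δ x) γ (G.tri a δ y) := by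
    intro b a δ ha x γ y
    obtain ⟨w, δs, h⟩ := G.exists_prodF_snoc_eq_tri (e b) a (γs b) δ ha j
    simpa only [h] using hvi w δs x γ y
  -- `F'` commutes with left multiplications, so it preserves elements fixed by `e b`.
  have hF'fix : ∀ (b : Λ) (a : M) (δ : Γ), G.tri (e b) (γs b) a = a →
      G.tri (e b) (γs b) (F' a₁ a δ) = F' a₁ a δ := by
    intro b a δ ha
    refine sub_eq_zero.1 (hii _ fun β m => ?_)
    rw [G.sub_tri, G.assoc, hFmid, ← G.assoc, ha, sub_self]
  have hF'sub : ∀ (a : M) (δ : Γ) (z : M), G.tri (F' a₁ a δ) (γs a₁) z =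
      G.tri a δ z - G.tri a δ (G.tri (e a₁) (γs a₁) z) := by
    intro a δ z
    rw [hFmid, hFγ, G.tri_sub]
  have hmixed : ∀ p γ q, G.tri (e a₁) (γs a₁) p = 0 → G.tri (e a₁) (γs a₁) q = q →
      f p γ q = 0 := by
    intro p γ q hp hq
    have hez : G.tri (e a₁) (γs a₁) (f p γ q) = 0 := by
      rw [hleft a₁ (e a₁) (γs a₁) (hidem a₁), hp, (hv _ _).2]
    refine hiii _ fun b β δ m => ?_
    have ha : G.tri (e b) (γs b) (G.tri (e b) β m) = G.tri (e b) β m := by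
      rw [← G.assoc, hidem]
    have h1 := hF'sub (G.tri (e b) β m) δ (f p γ q)
    rw [hez, G.tri_zero, sub_zero] at h1
    rw [← h1, hleft b _ _ (hF'fix b _ δ ha), hF'sub _ _ q, hq, sub_self, (hv _ _).1]
  intro x hx u hu γ
  have hx1 : G.tri (e a₁) (γs a₁) x = x := by simpa using hx.1
  have hx2 : G.tri x (γs a₁) (e a₁) = 0 := by simpa using hx.2
  have hu1 : G.tri (e a₁) (γs a₁) u = u := by simpa using hu.1
  have hu2 : G.tri u (γs a₁) (e a₁) = 0 := by simpa using hu.2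
  have hright : ∀ (δ : Γ) (y : M), f (G.tri x δ y) γ (G.tri u δ y) = 0 := by
    intro δ y
    have hY : ∀ w, G.tri w (γs a₁) (F a₁ δ y) = G.tri (w - G.tri w (γs a₁) (e a₁)) δ y := by
      intro w
      rw [← hFmid, hF'γ]
    have hxY : G.tri x (γs a₁) (F a₁ δ y) = G.tri x δ y := by rw [hY, hx2, sub_zero]
    have huY : G.tri u (γs a₁) (F a₁ δ y) = G.tri u δ y := by rw [hY, hu2, sub_zero]
    have heY : G.tri (e a₁) (γs a₁) (F a₁ δ y) = 0 := by
      rw [hY, hidem, sub_self, G.zero_tri]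
    have hxu : G.tri x (γs a₁) u = 0 := by
      rw [← hu1, ← G.assoc, hx2, G.zero_tri]
    have hs : G.tri (e a₁) (γs a₁) (e a₁ + x) = e a₁ + x := by
      rw [G.add_right, hidem, hx1]
    have heu : G.tri (e a₁) (γs a₁) (G.tri u δ y) = G.tri u δ y := by
      rw [← G.assoc, hu1]
    have h := hleft a₁ (e a₁ + x) (γs a₁) hs (F a₁ δ y) γ (G.tri u δ y)
    rw [hmixed _ _ _ heY heu, G.tri_zero, G.add_left, heY, zero_add, hxY, G.add_left, heu,
      ← G.assoc, hxu, G.zero_tri, add_zero] at h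
    exact h.symm
  refine G.eq_zero_of_prodF_cons hii (j + 1) _ fun w δ => ?_
  rw [hvii]
  simpa only [GammaRing.prodF, Fin.cons_zero, Fin.cons_succ] using hright (δ 0) _
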